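/- Let ρ₀ satisfy the stated first-order equation with limits a and b at ∓∞, and fix α with 0 < α < min{√2(b² − a²)a, √2(b² − a²)b}. Let h : ℝ → ℝ be continuous with |h(z)| ≤ C e^{−α|z|} for all z ∈ ℝ and some C > 0. Then v₂*(z) := −ρ₀(z) · ∫_{−∞}^z ρ₀(ς)^{−2} ( ∫_{−∞}^ς h(τ) ρ₀(τ) dτ ) dς is well defined, twice continuously differentiable, satisfies −(v₂*)''(z) + f_B(ρ₀(z)) v₂*(z) = h(z) for all z ∈ ℝ, and lim_{z→−∞} v₂*(z) = 0. If in addition ∫_ℝ h(z) ρ₀(z) dz = 0, then v₂* is bounded on ℝ. -/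

import Mathlib

open Filter MeasureTheory

/-- `f_B(ρ) = (ρ² − a²)(ρ² − b²)(2ρ² − a² − b²)`. -/
noncomputable def fB (a b ρ : ℝ) : ℝ :=
  (ρ ^ 2 - a ^ 2) * (ρ ^ 2 - b ^ 2) * (2 * ρ ^ 2 - a ^ 2 - b ^ 2)

/-- `v₂*(z) = −ρ₀(z) ∫_{−∞}^z ρ₀(ς)⁻² (∫_{−∞}^ς h(τ)ρ₀(τ) dτ) dς`. -/
noncomputable def v2star (ρ₀ h : ℝ → ℝ) (z : ℝ) : ℝ :=
  -ρ₀ z * ∫ ς in Set.Iic z, ((ρ₀ ς) ^ 2)⁻¹ * ∫ τ in Set.Iic ς, h τ * ρ₀ τ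


theorem aux_left (α K : ℝ) (hα : 0 < α) (g : ℝ → ℝ) (hg : Continuous g)
    (hb : ∀ z, |g z| ≤ K * Real.exp (α * z)) :
    (∀ z, IntegrableOn g (Set.Iic z)) ∧
    (∀ z, HasDerivAt (fun x => ∫ t in Set.Iic x, g t) (g z) z) ∧
    (∀ z, |∫ t in Set.Iic z, g t| ≤ K / α * Real.exp (α * z)) := by
  have hint : ∀ z, IntegrableOn g (Set.Iic z) := fun z =>
    Integrable.mono' ((integrableOn_exp_mul_Iic hα z).const_mul K)
      hg.aestronglyMeasurable (ae_of_all _ hb)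
  refine ⟨hint, fun z => ?_, fun z => ?_⟩
  · have e : (fun x => ∫ t in Set.Iic x, g t) =
        fun x => (∫ t in Set.Iic 0, g t) + ∫ t in (0 : ℝ)..x, g t := by
      funext x
      have := intervalIntegral.integral_Iic_sub_Iic (hint 0) (hint x)
      linarith
    rw [e]
    exact (intervalIntegral.integral_hasDerivAt_right (hg.intervalIntegrable _ _)
      (hg.stronglyMeasurableAtFilter _ _) hg.continuousAt).const_add _
  · have := norm_integral_le_of_norm_le (f := g) ((integrableOn_exp_mul_Iic hα z).const_mul K)
      (ae_of_all _ hb)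
    rw [integral_const_mul, integral_exp_mul_Iic hα] at this
    rw [Real.norm_eq_abs] at this
    calc _ ≤ _ := this
      _ = _ := by ring

theorem aux_right (α K : ℝ) (hα : 0 < α) (g : ℝ → ℝ) (hg : Continuous g)
    (hb : ∀ z, |g z| ≤ K * Real.exp (-α * z)) :
    (∀ z, IntegrableOn g (Set.Ioi z)) ∧
    (∀ z, |∫ t in Set.Ioi z, g t| ≤ K / α * Real.exp (-α * z)) := by
  have hα' : -α < 0 := by linarith
  have hint : ∀ z, IntegrableOn g (Set.Ioi z) := fun z =>
    Integrable.mono' ((integrableOn_exp_mul_Ioi hα' z).const_mul K)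
      hg.aestronglyMeasurable (ae_of_all _ hb)
  refine ⟨hint, fun z => ?_⟩
  have := norm_integral_le_of_norm_le (f := g) ((integrableOn_exp_mul_Ioi hα' z).const_mul K)
      (ae_of_all _ hb)
  rw [integral_const_mul, integral_exp_mul_Ioi hα'] at this
  rw [Real.norm_eq_abs] at this
  calc _ ≤ _ := this
    _ = _ := by rw [neg_div_neg_eq]; ring

theorem aux_contDiff (n : ℕ) (f g : ℝ → ℝ) (hd : ∀ z, HasDerivAt f (g z) z)
    (hg : ContDiff ℝ n g) : ContDiff ℝ (n + 1) f := by
  rw [contDiff_succ_iff_deriv]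
  refine ⟨fun z => (hd z).differentiableAt, by simp, ?_⟩
  rwa [show deriv f = g from funext fun z => (hd z).deriv]

/-- For continuous `h` with `|h(z)| ≤ C e^{−α|z|}`, the function `v₂*` is
well defined, `C²`, solves `−(v₂*)'' + f_B(ρ₀)v₂* = h`, tends to `0` at `−∞`; and if
moreover `∫ h ρ₀ = 0` then `v₂*` is bounded on `ℝ`. -/
theorem statement13 (a b α : ℝ) (ha : 0 < a) (hab : a < b)
    (hα : 0 < α)
    (hα' : α < min (Real.sqrt 2 * (b ^ 2 - a ^ 2) * a) (Real.sqrt 2 * (b ^ 2 - a ^ 2) * b))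
    (ρ₀ : ℝ → ℝ) (hreg : ContDiff ℝ 1 ρ₀)
    (hderiv : ∀ z, deriv ρ₀ z =
      Real.sqrt 2 / 2 * ((ρ₀ z) ^ 2 - a ^ 2) * (b ^ 2 - (ρ₀ z) ^ 2))
    (hbnd : ∀ z, a < ρ₀ z ∧ ρ₀ z < b)
    (hbot : Tendsto ρ₀ atBot (nhds a))
    (htop : Tendsto ρ₀ atTop (nhds b))
    (h : ℝ → ℝ) (hh : Continuous h)
    (C : ℝ) (hC : 0 < C) (hdec : ∀ z : ℝ, |h z| ≤ C * Real.exp (-α * |z|)) :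
    (∀ ς : ℝ, IntegrableOn (fun τ => h τ * ρ₀ τ) (Set.Iic ς)) ∧
    (∀ z : ℝ, IntegrableOn
      (fun ς => ((ρ₀ ς) ^ 2)⁻¹ * ∫ τ in Set.Iic ς, h τ * ρ₀ τ) (Set.Iic z)) ∧
    ContDiff ℝ 2 (v2star ρ₀ h) ∧
    (∀ z : ℝ, -(deriv (deriv (v2star ρ₀ h)) z) + fB a b (ρ₀ z) * v2star ρ₀ h z = h z) ∧
    Tendsto (v2star ρ₀ h) atBot (nhds 0) ∧
    ((∫ z : ℝ, h z * ρ₀ z) = 0 → ∃ M, ∀ z, |v2star ρ₀ h z| ≤ M) := by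
  have hρpos : ∀ z, 0 < ρ₀ z := fun z => ha.trans (hbnd z).1
  have hρne : ∀ z, ρ₀ z ≠ 0 := fun z => (hρpos z).ne'
  have hρd : ∀ z, HasDerivAt ρ₀
      (Real.sqrt 2 / 2 * ((ρ₀ z) ^ 2 - a ^ 2) * (b ^ 2 - (ρ₀ z) ^ 2)) z := fun z => by
    rw [← hderiv]
    exact (hreg.differentiable (by norm_num) z).hasDerivAt
  have hρ2 : ContDiff ℝ 2 ρ₀ := by
    have := aux_contDiff 1 ρ₀ _ hρd (by norm_num; fun_prop)
    norm_num at this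
    exact this
  have hb : 0 < b := ha.trans hab
  have hgc : Continuous (fun τ => h τ * ρ₀ τ) := hh.mul hreg.continuous
  have hga : ∀ z, |h z * ρ₀ z| ≤ C * b * Real.exp (-α * |z|) := fun z => by
    rw [abs_mul, abs_of_pos (hρpos z)]
    calc _ ≤ C * Real.exp (-α * |z|) * b :=
          mul_le_mul (hdec z) (hbnd z).2.le (hρpos z).le (by positivity)
      _ = _ := by ring
  have hgl : ∀ z, |h z * ρ₀ z| ≤ C * b * Real.exp (α * z) := fun z =>
    (hga z).trans (mul_le_mul_of_nonneg_left
      (Real.exp_le_exp.2 (by nlinarith [neg_abs_le z])) (by positivity))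
  have hgr : ∀ z, |h z * ρ₀ z| ≤ C * b * Real.exp (-α * z) := fun z =>
    (hga z).trans (mul_le_mul_of_nonneg_left
      (Real.exp_le_exp.2 (by nlinarith [le_abs_self z])) (by positivity))
  obtain ⟨i1, d1, b1⟩ := aux_left α _ hα _ hgc hgl
  obtain ⟨j1, c1⟩ := aux_right α _ hα _ hgc hgr
  set G : ℝ → ℝ := fun x => ∫ τ in Set.Iic x, h τ * ρ₀ τ with hG
  have hG1 : ContDiff ℝ 1 G := by
    have := aux_contDiff 0 G _ d1 (by simpa using hgc)
    simpa using this
  have hg2 : ContDiff ℝ 1 (fun ς => ((ρ₀ ς) ^ 2)⁻¹ * G ς) :=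
    ((hreg.pow 2).inv fun z => pow_ne_zero 2 (hρne z)).mul hG1
  have key : ∀ z t : ℝ, |G z| ≤ C * b / α * t →
      |((ρ₀ z) ^ 2)⁻¹ * G z| ≤ (a ^ 2)⁻¹ * (C * b / α) * t := fun z t ht => by
    rw [abs_mul, abs_of_pos (by have := hρpos z; positivity), mul_assoc]
    refine mul_le_mul ?_ ht (abs_nonneg _) (by positivity)
    exact inv_anti₀ (by positivity) (pow_le_pow_left₀ ha.le (hbnd z).1.le 2)
  obtain ⟨i2, d2, b2⟩ := aux_left α _ hα _ hg2.continuous (fun z => key z _ (b1 z))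
  set W : ℝ → ℝ := fun x => ∫ ς in Set.Iic x, ((ρ₀ ς) ^ 2)⁻¹ * G ς with hW
  have hW2 : ContDiff ℝ 2 W := by
    have := aux_contDiff 1 W _ d2 (by simpa using hg2)
    norm_num at this
    exact this
  have hv : v2star ρ₀ h = fun z => -ρ₀ z * W z := rfl
  have hvW : ∀ z, |v2star ρ₀ h z| ≤ b * |W z| := fun z => by
    rw [hv]
    simp only [abs_mul, abs_neg, abs_of_pos (hρpos z)]
    exact mul_le_mul_of_nonneg_right (hbnd z).2.le (abs_nonneg _)
  refine ⟨i1, i2, ?_, ?_, ?_, ?_⟩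
  · rw [hv]; exact hρ2.neg.mul hW2
  · have e1 : deriv (v2star ρ₀ h) = fun z =>
        -(Real.sqrt 2 / 2 * ((ρ₀ z) ^ 2 - a ^ 2) * (b ^ 2 - (ρ₀ z) ^ 2)) * W z
          - (ρ₀ z)⁻¹ * G z := by
      funext z
      rw [hv]
      refine (HasDerivAt.deriv ((hρd z).neg.mul (d2 z))).trans ?_
      have := hρne z
      simp only [Pi.neg_apply]
      field_simp
      try ring
    intro z
    rw [e1]
    have hd := ((((((hρd z).pow 2).sub_const (a ^ 2)).const_mul (Real.sqrt 2 / 2)).mul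
      (((hρd z).pow 2).const_sub (b ^ 2))).neg.mul (d2 z)).sub
      (((hρd z).inv (hρne z)).mul (d1 z))
    have hd' := HasDerivAt.deriv hd
    have e2 : deriv (fun z =>
        -(Real.sqrt 2 / 2 * ((ρ₀ z) ^ 2 - a ^ 2) * (b ^ 2 - (ρ₀ z) ^ 2)) * W z
          - (ρ₀ z)⁻¹ * G z) z = _ := hd'
    rw [e2, hv]
    have := hρne z
    have hs : Real.sqrt 2 ^ 2 = 2 := Real.sq_sqrt (by norm_num)
    simp only [Pi.neg_apply, Pi.mul_apply, Pi.pow_apply, Pi.inv_apply, fB]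
    generalize W z = w
    generalize G z = g
    generalize ρ₀ z = r at *
    generalize h z = y
    generalize Real.sqrt 2 = s at *
    field_simp
    ring_nf
    simp only [hs]
    ring_nf
  · have ht : Tendsto (fun z => b * ((a ^ 2)⁻¹ * (C * b / α) / α * Real.exp (α * z)))
        atBot (nhds 0) := by
      have : Tendsto (fun z => Real.exp (α * z)) atBot (nhds 0) :=
        Real.tendsto_exp_atBot.comp (tendsto_id.const_mul_atBot hα)
      simpa using (this.const_mul ((a ^ 2)⁻¹ * (C * b / α) / α)).const_mul b
    exact squeeze_zero_norm (fun z => (hvW z).trans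
      (mul_le_mul_of_nonneg_left (b2 z) hb.le)) ht
  · intro h0
    have hGr : ∀ z, |G z| ≤ C * b / α * Real.exp (-α * z) := fun z => by
      have e := intervalIntegral.integral_Iic_add_Ioi (i1 z) (j1 z)
      rw [h0] at e
      have : G z = -∫ t in Set.Ioi z, h t * ρ₀ t := by
        simp only [hG]; linarith
      rw [this, abs_neg]
      exact c1 z
    obtain ⟨j2, c2⟩ := aux_right α _ hα _ hg2.continuous (fun z => key z _ (hGr z))
    set L := (a ^ 2)⁻¹ * (C * b / α) / α with hL
    have hLp : 0 ≤ L := by positivity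
    refine ⟨b * (|∫ ς, ((ρ₀ ς) ^ 2)⁻¹ * G ς| + L), fun z => (hvW z).trans
      (mul_le_mul_of_nonneg_left ?_ hb.le)⟩
    rcases le_total z 0 with hz | hz
    · have h1 : Real.exp (α * z) ≤ 1 := Real.exp_le_one_iff.2 (by nlinarith)
      have h2 := b2 z
      have h3 := abs_nonneg (∫ ς, ((ρ₀ ς) ^ 2)⁻¹ * G ς)
      have h4 : |W z| ≤ L * Real.exp (α * z) := h2
      nlinarith
    · have h1 : Real.exp (-α * z) ≤ 1 := Real.exp_le_one_iff.2 (by nlinarith)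
      have h2 := c2 z
      have e := intervalIntegral.integral_Iic_add_Ioi (i2 z) (j2 z)
      have : W z = (∫ ς, ((ρ₀ ς) ^ 2)⁻¹ * G ς) - ∫ t in Set.Ioi z, ((ρ₀ t) ^ 2)⁻¹ * G t := by
        simp only [hW]; linarith
      rw [this]
      have h5 := abs_sub (∫ ς, ((ρ₀ ς) ^ 2)⁻¹ * G ς) (∫ t in Set.Ioi z, ((ρ₀ t) ^ 2)⁻¹ * G t)
      nlinarith
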